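/- arXiv:1209.6462 — 3 statements merged into one kernel-verified Lean document; each statement's English description precedes it below -/
import Mathlib

section
/- Let n ≥ 1, let f be an (n−1)-cell of the n-dimensional cubical grid, and let B = B_{n−1}(f) be the (n−1)-block centered on f, regarded as a digital n-object (it consists of two voxels). Then for every 0 ≤ i ≤ n, the number of i-cells of B satisfies 2n·c_i(B) = (3n+i)·2^{n−i}·binom(n, i). -/
/-!
A cell lies in a voxel `v` exactly when its coordinates differ from those of `v` by at most one.
Hence the cells of the block centered on `f` are described one coordinate at a time: the `j`-th
coordinate is within one of an odd integer which is itself within one of `f j`. They are the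
integer points of a box, with five values `f j - 2, …, f j + 2` (three even, two odd) where `f j`
is even and three values `f j - 1, f j, f j + 1` (two even, one odd) where `f j` is odd. So the
cells of the block of a `d`-cell, `d < n`, have the generating polynomial
`∑ c_i X ^ i = (X + 2) ^ d * (2 X + 3) ^ (n - d)`. For `d = n - 1`, writing `P = (X + 2) ^ n`,
`2 n (X + 2) ^ (n - 1) (2 X + 3) = n (X + 2) ^ (n - 1) (3 (X + 2) + X) = 3 n P + X dP/dX`,
whose `i`-th coefficient is `(3 n + i) 2 ^ (n - i) C(n, i)`.
-/

namespace DigitalGeometry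

/-- The dimension of a cell of the cubical grid (doubled coordinates):
the number of odd coordinates. -/
def cdim {n : ℕ} (c : Fin n → ℤ) : ℕ :=
  (Finset.univ.filter fun j => Odd (c j)).card

/-- The bounding relation `e < f` between cells of the grid. -/
def Bounds {n : ℕ} (e f : Fin n → ℤ) : Prop :=
  cdim e < cdim f ∧ ∀ j, e j = f j ∨ (Odd (f j) ∧ |e j - f j| = 1)

/-- A voxel is an `n`-cell: all coordinates odd. -/
def IsVoxel {n : ℕ} (v : Fin n → ℤ) : Prop := ∀ j, Odd (v j)

/-- The `i`-block centered on an `i`-cell `e`: all voxels bounded by `e`. -/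
def Block {n : ℕ} (e : Fin n → ℤ) : Set (Fin n → ℤ) :=
  {v | IsVoxel v ∧ Bounds e v}

/-- `Cells D i` : the `i`-cells of the object `D` (for `i < n` those bounding
some voxel of `D`; for `i = n` it is `D` itself). -/
def Cells {n : ℕ} (D : Set (Fin n → ℤ)) (i : ℕ) : Set (Fin n → ℤ) :=
  {e | cdim e = i ∧ (e ∈ D ∨ ∃ v ∈ D, Bounds e v)}

/-- `c_i(D)` : the number of `i`-cells of `D`. -/
noncomputable def cCount {n : ℕ} (D : Set (Fin n → ℤ)) (i : ℕ) : ℕ := (Cells D i).ncard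

/-- The free `i`-cells of `D`: those whose `i`-block is not contained in `D`. -/
def FreeCells {n : ℕ} (D : Set (Fin n → ℤ)) (i : ℕ) : Set (Fin n → ℤ) :=
  {e | e ∈ Cells D i ∧ ¬ Block e ⊆ D}

/-- `c*_i(D)` : the number of free `i`-cells of `D`. -/
noncomputable def cStar {n : ℕ} (D : Set (Fin n → ℤ)) (i : ℕ) : ℕ := (FreeCells D i).ncard

/-- The non-free `i`-cells of `D`. -/
def NonFreeCells {n : ℕ} (D : Set (Fin n → ℤ)) (i : ℕ) : Set (Fin n → ℤ) :=
  {e | e ∈ Cells D i ∧ Block e ⊆ D}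

/-- `c'_i(D)` : the number of non-free `i`-cells of `D`. -/
noncomputable def cPrime {n : ℕ} (D : Set (Fin n → ℤ)) (i : ℕ) : ℕ := (NonFreeCells D i).ncard

/-- `InterCell v1 v2 e` : the intersection of the voxels `v1`, `v2`
(as subsets of `ℝ^n`) equals the cell `e`. -/
def InterCell {n : ℕ} (v1 v2 e : Fin n → ℤ) : Prop :=
  ∀ j, (v1 j = v2 j ∧ e j = v1 j) ∨
       (e j + 1 = max (v1 j) (v2 j) ∧ e j - 1 = min (v1 j) (v2 j))

/-- `e` is an `(n-2)`-hub of `D`, i.e. `D` has an `(n-2)`-gap over `e`. -/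
def IsHub {n : ℕ} (D : Set (Fin n → ℤ)) (e : Fin n → ℤ) : Prop :=
  cdim e = n - 2 ∧ ∃ v1 v2 : Fin n → ℤ, v1 ≠ v2 ∧
    Block e ∩ D = {v1, v2} ∧ InterCell v1 v2 e

/-- `g_{n-2}(D)` : the number of `(n-2)`-gaps of `D`. -/
noncomputable def gapCount {n : ℕ} (D : Set (Fin n → ℤ)) : ℕ := {e | IsHub D e}.ncard

/-- `b_j(e, D)` : the number of free `j`-cells of `D` bounded by `e`. -/
noncomputable def bcount {n : ℕ} (e : Fin n → ℤ) (D : Set (Fin n → ℤ)) (j : ℕ) : ℕ :=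
  {f | f ∈ FreeCells D j ∧ Bounds e f}.ncard

/-- Two voxels are `i`-adjacent if they are distinct and their intersection
contains an `i`-cell. -/
def Adj {n : ℕ} (i : ℕ) (v1 v2 : Fin n → ℤ) : Prop :=
  v1 ≠ v2 ∧ ∃ e : Fin n → ℤ, cdim e = i ∧ Bounds e v1 ∧ Bounds e v2

open Finset Polynomial

section Dimension

variable {n : ℕ}

lemma cdim_le (e : Fin n → ℤ) : cdim e ≤ n :=
  (card_filter_le _ _).trans_eq (card_fin n)

lemma cdim_eq_iff_isVoxel (e : Fin n → ℤ) : cdim e = n ↔ IsVoxel e := by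
  simpa [cdim, IsVoxel] using card_filter_eq_iff (s := univ) (p := fun j => Odd (e j))

lemma IsVoxel.cdim_eq {v : Fin n → ℤ} (hv : IsVoxel v) : cdim v = n :=
  (cdim_eq_iff_isVoxel v).2 hv

lemma cdim_lt_iff_not_isVoxel (e : Fin n → ℤ) : cdim e < n ↔ ¬ IsVoxel e := by
  rw [← cdim_eq_iff_isVoxel, (cdim_le e).lt_iff_ne]

lemma prod_ite_odd_eq_pow_cdim {R : Type*} [CommMonoid R] (e : Fin n → ℤ) (a b : R) :
    ∏ j, (if Odd (e j) then a else b) = a ^ cdim e * b ^ (n - cdim e) := by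
  have hcompl : #{j | ¬ Odd (e j)} = n - cdim e := by
    rw [filter_not, card_sdiff_of_subset (filter_subset _ _), card_fin, cdim]
  rw [prod_ite, prod_const, prod_const, hcompl, cdim]

lemma sum_pow_cdim_piFinset {R : Type*} [CommSemiring R] (S : Fin n → Finset ℤ) (t : R) :
    ∑ e ∈ Fintype.piFinset S, t ^ cdim e = ∏ j, ∑ x ∈ S j, if Odd x then t else 1 := by
  simp only [prod_univ_sum, prod_ite_odd_eq_pow_cdim, one_pow, mul_one]

lemma card_filter_cdim_eq_coeff (T : Finset (Fin n → ℤ)) (i : ℕ) :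
    #{e ∈ T | cdim e = i} = (∑ e ∈ T, (X : ℕ[X]) ^ cdim e).coeff i := by
  simp only [finsetSum_coeff, coeff_X_pow, card_filter, eq_comm]

end Dimension

section Cells

variable {n : ℕ}

lemma IsVoxel.eq_of_abs_sub_le_one {v w : Fin n → ℤ} (hv : IsVoxel v) (hw : IsVoxel w)
    (h : ∀ j, |v j - w j| ≤ 1) : v = w := by
  funext j
  obtain ⟨a, ha⟩ := hv j
  obtain ⟨b, hb⟩ := hw j
  have := abs_le.1 (h j)
  omega

lemma bounds_iff_of_isVoxel {e v : Fin n → ℤ} (hv : IsVoxel v) :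
    Bounds e v ↔ ¬ IsVoxel e ∧ ∀ j, |e j - v j| ≤ 1 := by
  have hcoord (j : Fin n) : (e j = v j ∨ Odd (v j) ∧ |e j - v j| = 1) ↔ |e j - v j| ≤ 1 := by
    rw [and_iff_right (hv j), Int.abs_le_one_iff, abs_eq zero_le_one, sub_eq_zero]
  simp only [Bounds, hv.cdim_eq, cdim_lt_iff_not_isVoxel, hcoord]

lemma mem_block_iff {f v : Fin n → ℤ} (hf : ¬ IsVoxel f) :
    v ∈ Block f ↔ IsVoxel v ∧ ∀ j, |f j - v j| ≤ 1 :=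
  and_congr_right fun hv => (bounds_iff_of_isVoxel hv).trans (and_iff_right hf)

lemma mem_cells_iff {D : Set (Fin n → ℤ)} (hD : ∀ v ∈ D, IsVoxel v) {i : ℕ} {e : Fin n → ℤ} :
    e ∈ Cells D i ↔ cdim e = i ∧ ∃ v ∈ D, ∀ j, |e j - v j| ≤ 1 := by
  refine and_congr_right fun _ => ⟨?_, ?_⟩
  · rintro (he | ⟨v, hv, hev⟩)
    · exact ⟨e, he, by simp⟩
    · exact ⟨v, hv, ((bounds_iff_of_isVoxel (hD v hv)).1 hev).2⟩
  · rintro ⟨v, hv, hev⟩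
    by_cases he : IsVoxel e
    · exact .inl (he.eq_of_abs_sub_le_one (hD v hv) hev ▸ hv)
    · exact .inr ⟨v, hv, (bounds_iff_of_isVoxel (hD v hv)).2 ⟨he, hev⟩⟩

end Cells

section Block

/-- The values taken by a coordinate over the cells of the block centered on a cell at which
this coordinate is `a`. -/
noncomputable def blockInterval (a : ℤ) : Finset ℤ :=
  if Odd a then Icc (a - 1) (a + 1) else Icc (a - 2) (a + 2)

lemma mem_blockInterval_iff {a b : ℤ} :
    b ∈ blockInterval a ↔ ∃ x, Odd x ∧ |a - x| ≤ 1 ∧ |b - x| ≤ 1 := by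
  simp only [blockInterval, abs_le, Int.odd_iff]
  split_ifs with ha <;> rw [mem_Icc]
  · exact ⟨fun hb => ⟨a, by omega⟩, by rintro ⟨x, hx⟩; omega⟩
  · refine ⟨fun hb => ?_, by rintro ⟨x, hx⟩; omega⟩
    rcases le_total a b with hab | hba
    · exact ⟨a + 1, by omega⟩
    · exact ⟨a - 1, by omega⟩

lemma sum_blockInterval {R : Type*} [CommSemiring R] (a : ℤ) (t : R) :
    ∑ x ∈ blockInterval a, (if Odd x then t else 1) = if Odd a then t + 2 else 2 * t + 3 := by
  by_cases ha : Odd a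
  · have hIcc : Icc (a - 1) (a + 1) = {a - 1, a, a + 1} := by grind
    rw [blockInterval, if_pos ha, hIcc, sum_insert (by grind), sum_pair (by grind)]
    simp only [Int.odd_sub, Int.odd_add, ha, Int.not_even_one, if_true, if_false, iff_false,
      not_true_eq_false]
    ring
  · have hIcc : Icc (a - 2) (a + 2) = {a - 2, a - 1, a, a + 1, a + 2} := by grind
    rw [blockInterval, if_neg ha, hIcc, sum_insert (by grind), sum_insert (by grind),
      sum_insert (by grind), sum_pair (by grind)]
    simp only [Int.odd_sub, Int.odd_add, ha, even_two, Int.not_even_one, if_true, if_false,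
      iff_true]
    ring

variable {n : ℕ} {f : Fin n → ℤ}

lemma cells_block_eq (hf : ¬ IsVoxel f) (i : ℕ) :
    Cells (Block f) i = {e ∈ Fintype.piFinset fun j => blockInterval (f j) | cdim e = i} := by
  ext e
  -- The coordinates of a voxel of the block that contains `e` can be chosen independently.
  have hbox : (∃ v ∈ Block f, ∀ j, |e j - v j| ≤ 1) ↔ ∀ j, e j ∈ blockInterval (f j) := by
    simp only [mem_block_iff hf, IsVoxel, mem_blockInterval_iff, Classical.skolem, forall_and,
      and_assoc]
  rw [mem_cells_iff fun v hv => hv.1, hbox, mem_coe, mem_filter, Fintype.mem_piFinset, and_comm]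

theorem cCount_block (hf : ¬ IsVoxel f) (i : ℕ) :
    cCount (Block f) i
      = ((X + 2) ^ cdim f * (2 * X + 3) ^ (n - cdim f) : ℕ[X]).coeff i := by
  rw [cCount, cells_block_eq hf, Set.ncard_coe_finset, card_filter_cdim_eq_coeff,
    sum_pow_cdim_piFinset]
  simp only [sum_blockInterval, prod_ite_odd_eq_pow_cdim]

end Block

lemma coeff_X_mul_derivative {R : Type*} [CommSemiring R] (p : R[X]) (i : ℕ) :
    (X * derivative p).coeff i = i * p.coeff i := by
  cases i with
  | zero => simp
  | succ i => rw [coeff_X_mul, coeff_derivative, mul_comm, Nat.cast_succ]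

lemma X_add_two_pow_mul_eq_add_X_mul_derivative {R : Type*} [CommSemiring R] (n : ℕ) :
    2 * (n : R[X]) * ((X + 2) ^ (n - 1) * (2 * X + 3))
      = 3 * (n : R[X]) * (X + 2) ^ n + X * derivative ((X + 2) ^ n) := by
  have hderiv : derivative ((X + 2 : R[X]) ^ n) = (n : R[X]) * (X + 2) ^ (n - 1) := by
    simp [derivative_pow]
  rw [hderiv]
  cases n with
  | zero => simp
  | succ n =>
    rw [Nat.add_sub_cancel]
    ring

lemma coeff_X_add_two_pow_mul (n i : ℕ) :
    2 * n * ((X + 2) ^ (n - 1) * (2 * X + 3) : ℕ[X]).coeff i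
      = (3 * n + i) * (2 ^ (n - i) * n.choose i) := by
  have hcoeff : ((X + 2 : ℕ[X]) ^ n).coeff i = 2 ^ (n - i) * n.choose i :=
    coeff_X_add_C_pow (2 : ℕ) n i
  calc 2 * n * ((X + 2) ^ (n - 1) * (2 * X + 3) : ℕ[X]).coeff i
      = (2 * (n : ℕ[X]) * ((X + 2) ^ (n - 1) * (2 * X + 3))).coeff i := by
        rw [mul_assoc, mul_assoc, coeff_ofNat_mul, coeff_natCast_mul, Nat.cast_id]
    _ = 3 * n * ((X + 2 : ℕ[X]) ^ n).coeff i + i * ((X + 2 : ℕ[X]) ^ n).coeff i := by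
        rw [X_add_two_pow_mul_eq_add_X_mul_derivative, coeff_add, coeff_X_mul_derivative, mul_assoc,
          mul_assoc, coeff_ofNat_mul, coeff_natCast_mul, Nat.cast_id, Nat.cast_id]
    _ = (3 * n + i) * (2 ^ (n - i) * n.choose i) := by rw [← add_mul, hcoeff]

/-- The number of `i`-cells of the `(n-1)`-block centered on an `(n-1)`-cell `f`
satisfies `2n·c_i(B_{n-1}(f)) = (3n+i)·2^(n-i)·C(n,i)`. -/
theorem cells_of_block (n : ℕ) (hn : 1 ≤ n) (f : Fin n → ℤ)
    (hf : cdim f = n - 1) (i : ℕ) (hi : i ≤ n) :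
    2 * n * cCount (Block f) i = (3 * n + i) * (2 ^ (n - i) * Nat.choose n i) := by
  have hvox : ¬ IsVoxel f :=
    (cdim_lt_iff_not_isVoxel f).1 (hf.trans_lt (Nat.sub_one_lt_of_lt hn))
  rw [cCount_block hvox, hf, Nat.sub_sub_self hn, pow_one, coeff_X_add_two_pow_mul]

end DigitalGeometry
end

section
/- Let n ≥ 2, let e be an (n−2)-cell of the n-dimensional cubical grid, and let L be an L-block centered on e, regarded as a digital n-object. Then the number of free (n−1)-cells of L is c*_{n−1}(L) = 2(3n−2). -/
/-!
Let `D` be a finite set of voxels. A voxel has `2n` facets and an `(n-1)`-cell lies in exactly two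
voxels, so counting incidences between the voxels of `D` and their facets gives
`c* + 2 c' = 2 n |D|`: a free facet is met once, a non-free one twice.

Let `e` be a cell of codimension `k ≥ 1`. Its block is a combinatorial `k`-cube: it has `2 ^ k`
voxels, and exactly `k` facets of each are non-free, one for each even coordinate of `e`. Counting
incidences again gives `2 c' = k * 2 ^ k` for the block, and removing a voxel destroys just the `k`
non-free facets incident to it. For the punctured block this leaves
`c* = 2 n (2 ^ k - 1) - k * 2 ^ k + 2 k = (2 n - k) (2 ^ k - 1) + k`, and an L-block is the case
`k = 2`.
-/

namespace DigitalGeometry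

section

open Finset

/-- The one-dimensional block of a coordinate: the odd `x` for which the unit interval `I(x)`
contains `I(m)`. -/
def oddNeighbors (m : ℤ) : Finset ℤ :=
  {x ∈ {m - 1, m, m + 1} | Odd x}

lemma mem_oddNeighbors {m x : ℤ} : x ∈ oddNeighbors m ↔ |m - x| ≤ 1 ∧ Odd x := by
  simp only [oddNeighbors, mem_filter, mem_insert, mem_singleton, abs_le]
  exact and_congr_left fun _ => by omega

lemma oddNeighbors_of_odd {m : ℤ} (hm : Odd m) : oddNeighbors m = {m} := by
  ext x
  simp only [mem_oddNeighbors, mem_singleton, Int.odd_iff, abs_le] at hm ⊢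
  omega

lemma oddNeighbors_of_not_odd {m : ℤ} (hm : ¬ Odd m) : oddNeighbors m = {m - 1, m + 1} := by
  ext x
  simp only [mem_oddNeighbors, mem_insert, mem_singleton, Int.odd_iff, abs_le] at hm ⊢
  omega

lemma card_oddNeighbors (m : ℤ) : #(oddNeighbors m) = if Odd m then 1 else 2 := by
  split_ifs with hm
  · rw [oddNeighbors_of_odd hm, card_singleton]
  · rw [oddNeighbors_of_not_odd hm, card_pair (by omega)]

lemma exists_add_units_eq_iff {x m : ℤ} (hx : Odd x) :
    (∃ σ : ℤˣ, x + σ = m) ↔ ¬ Odd m ∧ x ∈ oddNeighbors m := by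
  constructor
  · rintro ⟨σ, rfl⟩
    rcases Int.units_eq_one_or σ with rfl | rfl <;> simp [mem_oddNeighbors, hx, parity_simps]
  · rintro ⟨hm, hmem⟩
    rw [oddNeighbors_of_not_odd hm, mem_insert, mem_singleton] at hmem
    rcases hmem with rfl | rfl
    · exact ⟨1, by simp⟩
    · exact ⟨-1, by simp⟩

variable {n : ℕ} {e f v w : Fin n → ℤ} {D : Finset (Fin n → ℤ)}

lemma cdim_add_card_not_odd (c : Fin n → ℤ) : cdim c + #{j | ¬ Odd (c j)} = n := by
  simpa [cdim] using card_filter_add_card_filter_not (s := univ) fun j => Odd (c j)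

lemma IsVoxel.cdim_eq_s11 (hw : IsVoxel w) : cdim w = n := by
  simp [cdim, filter_true_of_mem fun j _ => hw j]

lemma cdim_add_one_eq_iff : cdim f + 1 = n ↔ ∃ j, ∀ i, Odd (f i) ↔ i ≠ j := by
  have hcard := cdim_add_card_not_odd f
  rw [show cdim f + 1 = n ↔ #{j | ¬ Odd (f j)} = 1 by omega, card_eq_one]
  simp only [Finset.ext_iff, mem_filter, mem_univ, true_and, mem_singleton]
  exact exists_congr fun j => forall_congr' fun i => not_iff_comm.trans iff_comm

/-- The voxels of which `e` is a (not necessarily proper) face. This is the block of `e`, as a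
finset, unless `e` is itself a voxel: then the block is empty but the star is `{e}`. -/
def voxelStar (e : Fin n → ℤ) : Finset (Fin n → ℤ) :=
  Fintype.piFinset fun j => oddNeighbors (e j)

lemma mem_voxelStar : v ∈ voxelStar e ↔ ∀ j, v j ∈ oddNeighbors (e j) :=
  Fintype.mem_piFinset

lemma isVoxel_of_mem_voxelStar (hv : v ∈ voxelStar e) : IsVoxel v :=
  fun j => (mem_oddNeighbors.1 (mem_voxelStar.1 hv j)).2

lemma coe_voxelStar (he : cdim e < n) : (voxelStar e : Set (Fin n → ℤ)) = Block e := by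
  ext v
  suffices v ∈ voxelStar e ↔ IsVoxel v ∧ ∀ j, e j = v j ∨ Odd (v j) ∧ |e j - v j| = 1 by
    rw [mem_coe, this]
    exact and_congr_right fun hv => by simp [Bounds, hv.cdim_eq_s11, he]
  rw [mem_voxelStar, IsVoxel, ← forall_and]
  refine forall_congr' fun j => ?_
  rw [mem_oddNeighbors, abs_le, abs_eq zero_le_one, Int.odd_iff]
  omega

lemma card_voxelStar (e : Fin n → ℤ) : #(voxelStar e) = 2 ^ (n - cdim e) := by
  have hcard := cdim_add_card_not_odd e
  simp only [voxelStar, Fintype.card_piFinset, card_oddNeighbors, prod_ite, prod_const,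
    one_pow, one_mul]
  congr 1
  omega

lemma voxelStar_nonempty (e : Fin n → ℤ) : (voxelStar e).Nonempty := by
  rw [← card_pos, card_voxelStar]
  positivity

lemma card_voxelStar_of_cdim_add_one_eq (hf : cdim f + 1 = n) : #(voxelStar f) = 2 := by
  rw [card_voxelStar, show n - cdim f = 1 by omega, pow_one]

/-- The facet of the voxel `w` orthogonal to the direction `p.1`, on the side given by the
sign `p.2`. -/
def facet (w : Fin n → ℤ) (p : Fin n × ℤˣ) : Fin n → ℤ :=
  Function.update w p.1 (w p.1 + p.2)

lemma odd_facet_iff (hw : IsVoxel w) (p : Fin n × ℤˣ) (i : Fin n) :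
    Odd (facet w p i) ↔ i ≠ p.1 := by
  obtain rfl | hi := eq_or_ne i p.1
  · rcases Int.units_eq_one_or p.2 with hp | hp <;>
      simpa [facet, hp, parity_simps] using hw p.1
  · simp [facet, hi, hw i]

lemma facet_injective (hw : IsVoxel w) : Function.Injective (facet w) := by
  intro p q hpq
  have hdir : p.1 = q.1 := by
    by_contra hne
    exact (odd_facet_iff hw p p.1).1 (hpq ▸ (odd_facet_iff hw q p.1).2 hne) rfl
  refine Prod.ext hdir (Units.ext ?_)
  simpa [facet, hdir] using congrFun hpq p.1

/-- The `(n-1)`-cells bounding the voxel `w`. -/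
def facets (w : Fin n → ℤ) : Finset (Fin n → ℤ) :=
  univ.image (facet w)

lemma card_facets (hw : IsVoxel w) : #(facets w) = 2 * n := by
  simp [facets, card_image_of_injective _ (facet_injective hw), mul_comm]

lemma mem_facets (hw : IsVoxel w) : f ∈ facets w ↔ cdim f + 1 = n ∧ w ∈ voxelStar f := by
  simp only [facets, mem_image, mem_univ, true_and, cdim_add_one_eq_iff, mem_voxelStar]
  constructor
  · rintro ⟨⟨j, σ⟩, rfl⟩
    refine ⟨⟨j, odd_facet_iff hw _⟩, fun i => mem_oddNeighbors.2 ⟨?_, hw i⟩⟩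
    obtain rfl | hi := eq_or_ne i j
    · simpa [facet] using (mem_oddNeighbors.1 ((exists_add_units_eq_iff (hw i)).1 ⟨σ, rfl⟩).2).1
    · simp [facet, hi]
  · rintro ⟨⟨j, hodd⟩, hmem⟩
    have hoff : ∀ i, i ≠ j → w i = f i := fun i hi => by
      simpa [oddNeighbors_of_odd ((hodd i).2 hi)] using hmem i
    obtain ⟨σ, hσ⟩ := (exists_add_units_eq_iff (hw j)).2 ⟨by simp [hodd], hmem j⟩
    refine ⟨(j, σ), funext fun i => ?_⟩
    obtain rfl | hi := eq_or_ne i j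
    · simp [facet, hσ]
    · simp [facet, hi, hoff i hi]

lemma mem_biUnion_facets (hD : ∀ w ∈ D, IsVoxel w) :
    f ∈ D.biUnion facets ↔ cdim f + 1 = n ∧ ∃ w ∈ D, w ∈ voxelStar f := by
  rw [mem_biUnion]
  constructor
  · rintro ⟨w, hw, hf⟩
    obtain ⟨hdim, hwf⟩ := (mem_facets (hD w hw)).1 hf
    exact ⟨hdim, w, hw, hwf⟩
  · rintro ⟨hdim, w, hw, hwf⟩
    exact ⟨w, hw, (mem_facets (hD w hw)).2 ⟨hdim, hwf⟩⟩

lemma coe_biUnion_facets (hn : 0 < n) (hD : ∀ w ∈ D, IsVoxel w) :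
    (D.biUnion facets : Set (Fin n → ℤ)) = Cells D (n - 1) := by
  ext f
  have hdim_iff : cdim f + 1 = n ↔ cdim f = n - 1 := by omega
  rw [mem_coe, mem_biUnion_facets hD, hdim_iff]
  refine and_congr_right fun hdim => ?_
  have hfD : f ∉ D := fun hf => by
    have := (hD f hf).cdim_eq_s11
    omega
  simp only [mem_coe, hfD, false_or]
  refine exists_congr fun w => and_congr_right fun hw => ?_
  rw [← mem_coe, coe_voxelStar (by omega)]
  exact and_iff_right (hD w hw)

lemma block_subset_iff_of_mem_biUnion_facets (hD : ∀ w ∈ D, IsVoxel w)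
    (hf : f ∈ D.biUnion facets) : Block f ⊆ D ↔ voxelStar f ⊆ D := by
  have hdim := ((mem_biUnion_facets hD).1 hf).1
  rw [← coe_voxelStar (by omega), coe_subset]

lemma cStar_eq_card (hn : 0 < n) (hD : ∀ w ∈ D, IsVoxel w) :
    cStar (D : Set (Fin n → ℤ)) (n - 1) = #{f ∈ D.biUnion facets | ¬ voxelStar f ⊆ D} := by
  rw [cStar, FreeCells, ← coe_biUnion_facets hn hD, ← Set.ncard_coe_finset, coe_filter]
  congr! 3 with f
  exact and_congr_right fun hf => not_congr (block_subset_iff_of_mem_biUnion_facets hD hf)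

lemma cPrime_eq_card (hn : 0 < n) (hD : ∀ w ∈ D, IsVoxel w) :
    cPrime (D : Set (Fin n → ℤ)) (n - 1) = #{f ∈ D.biUnion facets | voxelStar f ⊆ D} := by
  rw [cPrime, NonFreeCells, ← coe_biUnion_facets hn hD, ← Set.ncard_coe_finset, coe_filter]
  congr! 3 with f
  exact and_congr_right fun hf => block_subset_iff_of_mem_biUnion_facets hD hf

lemma sum_card_filter_facets (hD : ∀ w ∈ D, IsVoxel w) (P : (Fin n → ℤ) → Prop)
    [DecidablePred P] :
    ∑ w ∈ D, #{f ∈ facets w | P f} =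
      ∑ f ∈ D.biUnion facets with P f, #(D ∩ voxelStar f) := by
  simp_rw [← filter_mem_eq_inter]
  refine Eq.trans ?_ (sum_card_bipartiteAbove_eq_sum_card_bipartiteBelow
    fun w f => w ∈ voxelStar f)
  refine sum_congr rfl fun w hw => congrArg card (Finset.ext fun f => ?_)
  rw [mem_filter, mem_facets (hD w hw), mem_bipartiteAbove, mem_filter, mem_biUnion_facets hD]
  have hmeet : w ∈ voxelStar f → ∃ u ∈ D, u ∈ voxelStar f := fun hwf => ⟨w, hw, hwf⟩
  tauto

lemma two_mul_cPrime_eq_sum_card (hn : 0 < n) (hD : ∀ w ∈ D, IsVoxel w) :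
    2 * cPrime (D : Set (Fin n → ℤ)) (n - 1) =
      ∑ w ∈ D, #{f ∈ facets w | voxelStar f ⊆ D} := by
  rw [cPrime_eq_card hn hD, sum_card_filter_facets hD, mul_comm]
  refine (sum_const_nat fun f hf => ?_).symm
  obtain ⟨hf, hsub⟩ := mem_filter.1 hf
  rw [inter_eq_right.2 hsub, card_voxelStar_of_cdim_add_one_eq ((mem_biUnion_facets hD).1 hf).1]

lemma cStar_eq_sum_card (hn : 0 < n) (hD : ∀ w ∈ D, IsVoxel w) :
    cStar (D : Set (Fin n → ℤ)) (n - 1) =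
      ∑ w ∈ D, #{f ∈ facets w | ¬ voxelStar f ⊆ D} := by
  rw [cStar_eq_card hn hD, sum_card_filter_facets hD, card_eq_sum_ones]
  refine sum_congr rfl fun f hf => ?_
  obtain ⟨hf, hfree⟩ := mem_filter.1 hf
  obtain ⟨hdim, w, hw, hwf⟩ := (mem_biUnion_facets hD).1 hf
  have hpos : 0 < #(D ∩ voxelStar f) := card_pos.2 ⟨w, mem_inter.2 ⟨hw, hwf⟩⟩
  have hlt : #(D ∩ voxelStar f) < #(voxelStar f) :=
    card_lt_card ⟨inter_subset_right, fun h => hfree (h.trans inter_subset_left)⟩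
  rw [card_voxelStar_of_cdim_add_one_eq hdim] at hlt
  omega

theorem cStar_add_two_mul_cPrime (hn : 0 < n) (hD : ∀ w ∈ D, IsVoxel w) :
    cStar (D : Set (Fin n → ℤ)) (n - 1) + 2 * cPrime (D : Set (Fin n → ℤ)) (n - 1) =
      2 * n * #D := by
  rw [cStar_eq_sum_card hn hD, two_mul_cPrime_eq_sum_card hn hD, add_comm,
    ← sum_add_distrib, mul_comm]
  refine sum_const_nat fun w hw => ?_
  rw [card_filter_add_card_filter_not, card_facets (hD w hw)]

lemma mem_filter_voxelStar_subset (hD : ∀ w ∈ D, IsVoxel w) :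
    f ∈ {f ∈ D.biUnion facets | voxelStar f ⊆ D} ↔ cdim f + 1 = n ∧ voxelStar f ⊆ D := by
  rw [mem_filter, mem_biUnion_facets hD, and_assoc]
  refine and_congr_right fun _ => and_iff_right_of_imp fun hsub => ?_
  obtain ⟨w, hw⟩ := voxelStar_nonempty f
  exact ⟨w, hsub hw, hw⟩

lemma cPrime_erase_add_card (hn : 0 < n) (hD : ∀ w ∈ D, IsVoxel w) (hv : v ∈ D) :
    cPrime (D.erase v : Set (Fin n → ℤ)) (n - 1) + #{f ∈ facets v | voxelStar f ⊆ D} =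
      cPrime (D : Set (Fin n → ℤ)) (n - 1) := by
  have hD' : ∀ w ∈ D.erase v, IsVoxel w := fun w hw => hD w (mem_of_mem_erase hw)
  rw [cPrime_eq_card hn hD', cPrime_eq_card hn hD, add_comm,
    ← card_filter_add_card_filter_not (s := {f ∈ D.biUnion facets | voxelStar f ⊆ D})
      fun f => v ∈ voxelStar f]
  congr 2 <;> ext f
  · rw [mem_filter, mem_facets (hD v hv), mem_filter, mem_filter_voxelStar_subset hD,
      and_right_comm]
  · rw [mem_filter_voxelStar_subset hD', subset_erase, mem_filter, mem_filter_voxelStar_subset hD,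
      and_assoc]

lemma voxelStar_facet_subset_iff (hw : w ∈ voxelStar e) (p : Fin n × ℤˣ) :
    voxelStar (facet w p) ⊆ voxelStar e ↔ w p.1 + p.2 = e p.1 := by
  obtain ⟨j, σ⟩ := p
  have hvox := isVoxel_of_mem_voxelStar hw
  rw [mem_voxelStar] at hw
  constructor
  · intro hsub
    have hacross : Function.update w j (w j + 2 * σ) ∈ voxelStar (facet w (j, σ)) := by
      refine mem_voxelStar.2 fun i => ?_
      obtain rfl | hi := eq_or_ne i j
      · rcases Int.units_eq_one_or σ with rfl | rfl <;>
          simp [facet, mem_oddNeighbors, parity_simps, hvox i]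
      · simp [facet, hi, oddNeighbors_of_odd (hvox i)]
    have hnear := (mem_oddNeighbors.1 (hw j)).1
    have hfar := (mem_oddNeighbors.1 (mem_voxelStar.1 (hsub hacross) j)).1
    rw [Function.update_self] at hfar
    rw [abs_le] at hnear hfar
    rcases Int.units_eq_one_or σ with rfl | rfl <;> push_cast at * <;> omega
  · intro hj u hu
    rw [mem_voxelStar] at hu ⊢
    intro i
    obtain rfl | hi := eq_or_ne i j
    · simpa [facet, hj] using hu i
    · have hui : u i = w i := by simpa [facet, hi, oddNeighbors_of_odd (hvox i)] using hu i
      exact hui ▸ hw i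

lemma card_facets_voxelStar_subset (hw : w ∈ voxelStar e) :
    #{f ∈ facets w | voxelStar f ⊆ voxelStar e} = n - cdim e := by
  have hvox := isVoxel_of_mem_voxelStar hw
  have hcard := cdim_add_card_not_odd e
  rw [facets, filter_image, card_image_of_injective _ (facet_injective hvox)]
  simp only [voxelStar_facet_subset_iff hw]
  have hinj : Set.InjOn Prod.fst {p : Fin n × ℤˣ | w p.1 + p.2 = e p.1} := by
    rintro ⟨j, σ⟩ (hσ : w j + σ = e j) ⟨_, τ⟩ (hτ : w _ + τ = e _) (rfl : j = _)
    exact Prod.ext rfl (Units.ext (add_left_cancel (hσ.trans hτ.symm)))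
  have himage : image Prod.fst {p : Fin n × ℤˣ | w p.1 + p.2 = e p.1} =
      ({j | ¬ Odd (e j)} : Finset (Fin n)) := by
    ext j
    simpa [mem_voxelStar.1 hw j] using exists_add_units_eq_iff (m := e j) (hvox j)
  rw [← card_image_of_injOn (by simpa using hinj), himage]
  omega

lemma two_mul_cPrime_block (he : cdim e < n) :
    2 * cPrime (Block e) (n - 1) = 2 ^ (n - cdim e) * (n - cdim e) := by
  rw [← coe_voxelStar he, two_mul_cPrime_eq_sum_card (by omega) fun _ => isVoxel_of_mem_voxelStar,
    ← card_voxelStar]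
  exact sum_const_nat fun w hw => card_facets_voxelStar_subset hw

end

theorem free_cells_of_Lblock_general (n : ℕ) (e v : Fin n → ℤ) (hv : v ∈ Block e) :
    cStar (Block e \ {v}) (n - 1) =
      (n + cdim e) * (2 ^ (n - cdim e) - 1) + (n - cdim e) := by
  have he : cdim e < n := hv.2.1.trans_eq hv.1.cdim_eq_s11
  have hn : 0 < n := by omega
  have hvox : ∀ w ∈ voxelStar e, IsVoxel w := fun _ => isVoxel_of_mem_voxelStar
  have hvox_erase : ∀ w ∈ (voxelStar e).erase v, IsVoxel w :=
    fun w hw => hvox w (Finset.mem_of_mem_erase hw)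
  have hblock := two_mul_cPrime_block he
  rw [← coe_voxelStar he, ← Finset.coe_erase]
  rw [← coe_voxelStar he, Finset.mem_coe] at hv
  rw [← coe_voxelStar he] at hblock
  have herase := cPrime_erase_add_card hn hvox hv
  rw [card_facets_voxelStar_subset hv] at herase
  have htotal := cStar_add_two_mul_cPrime hn hvox_erase
  rw [Finset.card_erase_of_mem hv, card_voxelStar] at htotal
  have hcodim : n = cdim e + (n - cdim e) := by omega
  have hpow : 2 ^ (n - cdim e) = (2 ^ (n - cdim e) - 1) + 1 :=
    (Nat.sub_add_cancel Nat.one_le_two_pow).symm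
  rw [hpow] at hblock
  generalize 2 ^ (n - cdim e) - 1 = m at htotal hblock ⊢
  generalize n - cdim e = k at hcodim herase hblock ⊢
  zify at htotal herase hblock hcodim ⊢
  linear_combination htotal - 2 * herase - hblock + m * hcodim

/-- The number of free `(n-1)`-cells of an `L`-block centered on an
`(n-2)`-cell `e` is `2(3n-2)`. -/
theorem free_cells_of_Lblock (n : ℕ) (hn : 2 ≤ n) (e : Fin n → ℤ)
    (he : cdim e = n - 2) (v : Fin n → ℤ) (hv : v ∈ Block e) :
    cStar (Block e \ {v}) (n - 1) = 2 * (3 * n - 2) := by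
  rw [free_cells_of_Lblock_general n e v hv, he, Nat.sub_sub_self hn]
  omega

end DigitalGeometry
end

section
/- Let n ≥ 2, let D be a digital n-object, and let 0 ≤ i < j ≤ n−1. Then the sum, over all free i-cells e of D, of b_j(e, D) equals 2^{j−i}·binom(j, i)·c*_j(D), i.e. ∑_{e ∈ bd_i(D)} b_j(e, D) = c_{i→j}·c*_j(D) where c_{i→j} = 2^{j−i}·binom(j, i). -/
/-!
Bounding is transitive, so an `i`-cell that bounds a free `j`-cell is itself free. Counting the
pairs `e < f` of a free `i`-cell and a free `j`-cell from the side of `f`, each `f` therefore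
contributes the number of all its `i`-faces. An interval has two endpoints of dimension `0` and one
face of dimension `1`, and a point only itself, so for a product `f` of `j` intervals the faces have
the generating function `∑ x ^ cdim e = (x + 2) ^ j`, whose coefficient at `x ^ i` is
`2 ^ (j - i) * j.choose i`.
-/

namespace DigitalGeometry

lemma finsum_mem_ncard_comm {α β : Type*} (r : α → β → Prop) {s : Set α} {t : Set β}
    (ht : t.Finite) (hfib : ∀ b ∈ t, {a | a ∈ s ∧ r a b}.Finite) :
    ∑ᶠ a ∈ s, {b | b ∈ t ∧ r a b}.ncard = ∑ᶠ b ∈ t, {a | a ∈ s ∧ r a b}.ncard := by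
  classical
  lift t to Finset β using ht
  have hpairs : (⋃ b ∈ t, {a | a ∈ s ∧ r a b}).Finite := t.finite_toSet.biUnion hfib
  have habove (a : α) : {b | b ∈ (t : Set β) ∧ r a b}.ncard = (t.bipartiteAbove r a).card := by
    simp only [← Set.ncard_coe_finset, Finset.coe_bipartiteAbove, Finset.mem_coe]
  have hbelow (b : β) (hb : b ∈ t) :
      {a | a ∈ s ∧ r a b}.ncard = (hpairs.toFinset.bipartiteBelow r b).card := by
    rw [← Set.ncard_coe_finset, Finset.coe_bipartiteBelow]
    congr 1
    ext a
    simp only [Set.mem_ofPred_eq, Set.Finite.mem_toFinset, Set.mem_iUnion, exists_prop]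
    exact ⟨fun h => ⟨⟨b, hb, h⟩, h.2⟩, fun ⟨⟨_, _, has, _⟩, hab⟩ => ⟨has, hab⟩⟩
  have hsupp : s ∩ Function.support (fun a => (t.bipartiteAbove r a).card) ⊆ hpairs.toFinset := by
    rintro a ⟨has, hne⟩
    obtain ⟨b, hb⟩ := Finset.card_ne_zero.1 hne
    rw [Finset.mem_bipartiteAbove] at hb
    simpa using ⟨has, b, hb⟩
  have hsub : (hpairs.toFinset : Set α) ⊆ s := by
    rw [hpairs.coe_toFinset]
    exact Set.iUnion₂_subset fun _ _ _ h => h.1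
  rw [finsum_mem_coe_finset, Finset.sum_congr rfl hbelow,
    ← Finset.sum_card_bipartiteAbove_eq_sum_card_bipartiteBelow]
  simp_rw [habove]
  exact finsum_mem_eq_sum_of_subset _ hsupp hsub

section Faces

variable {n : ℕ}

/-- The faces, itself included, of the one-dimensional cell with doubled coordinate `m`. -/
def intervalFaces (m : ℤ) : Finset ℤ := if Odd m then {m - 1, m, m + 1} else {m}

/-- The faces of a cell, itself included: one interval face in each direction. -/
def faces (f : Fin n → ℤ) : Finset (Fin n → ℤ) := Fintype.piFinset fun k => intervalFaces (f k)

lemma mem_intervalFaces {a m : ℤ} : a ∈ intervalFaces m ↔ a = m ∨ Odd m ∧ |a - m| = 1 := by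
  unfold intervalFaces
  split_ifs with hm
  · simp only [Finset.mem_insert, Finset.mem_singleton, hm, true_and, abs_eq zero_le_one]
    omega
  · simp only [Finset.mem_singleton, hm, false_and, or_false]

lemma mem_faces {e f : Fin n → ℤ} : e ∈ faces f ↔ ∀ k, e k ∈ intervalFaces (f k) :=
  Fintype.mem_piFinset

lemma bounds_iff {e f : Fin n → ℤ} : Bounds e f ↔ cdim e < cdim f ∧ e ∈ faces f := by
  simp only [Bounds, mem_faces, mem_intervalFaces]

lemma self_mem_faces (f : Fin n → ℤ) : f ∈ faces f :=
  mem_faces.2 fun _ => mem_intervalFaces.2 (Or.inl rfl)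

lemma intervalFaces_subset {a m : ℤ} (h : a ∈ intervalFaces m) :
    intervalFaces a ⊆ intervalFaces m := by
  rcases mem_intervalFaces.1 h with rfl | ⟨hm, ham⟩
  · exact Finset.Subset.refl _
  · have ha : ¬ Odd a := by
      rw [Int.odd_iff] at hm ⊢
      rcases (abs_eq zero_le_one).1 ham with h | h <;> omega
    rwa [intervalFaces, if_neg ha, Finset.singleton_subset_iff]

lemma faces_subset {f g : Fin n → ℤ} (h : f ∈ faces g) : faces f ⊆ faces g :=
  Fintype.piFinset_subset _ _ fun k => intervalFaces_subset (mem_faces.1 h k)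

lemma Bounds.trans {e f g : Fin n → ℤ} (hef : Bounds e f) (hfg : Bounds f g) : Bounds e g := by
  rw [bounds_iff] at hef hfg ⊢
  exact ⟨hef.1.trans hfg.1, faces_subset hfg.2 hef.2⟩

lemma finite_setOf_bounds (f : Fin n → ℤ) : {e | Bounds e f}.Finite :=
  (faces f).finite_toSet.subset fun _ he => (bounds_iff.1 he).2

lemma pow_cdim {M : Type*} [CommMonoid M] (x : M) (e : Fin n → ℤ) :
    x ^ cdim e = ∏ k, if Odd (e k) then x else 1 := by
  rw [cdim, ← Finset.prod_const, Finset.prod_filter]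

lemma sum_intervalFaces {R : Type*} [CommSemiring R] (x : R) (m : ℤ) :
    ∑ a ∈ intervalFaces m, (if Odd a then x else 1) = if Odd m then x + 2 else 1 := by
  unfold intervalFaces
  split_ifs with hm
  · have hpred : ¬ Odd (m - 1) := by simpa [Int.odd_sub] using hm
    have hsucc : ¬ Odd (m + 1) := by simpa [Int.odd_add] using hm
    have hnotmem : m - 1 ∉ ({m, m + 1} : Finset ℤ) := by
      simp only [Finset.mem_insert, Finset.mem_singleton]
      omega
    rw [Finset.sum_insert hnotmem, Finset.sum_pair (by omega), if_neg hpred,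
      if_pos hm, if_neg hsucc]
    ring
  · rw [Finset.sum_singleton, if_neg hm]

lemma sum_faces_pow_cdim {R : Type*} [CommSemiring R] (x : R) (f : Fin n → ℤ) :
    ∑ e ∈ faces f, x ^ cdim e = (x + 2) ^ cdim f :=
  calc ∑ e ∈ faces f, x ^ cdim e
      = ∑ e ∈ faces f, ∏ k, if Odd (e k) then x else 1 := by simp_rw [pow_cdim]
    _ = ∏ k, ∑ a ∈ intervalFaces (f k), if Odd a then x else 1 :=
      (Finset.prod_univ_sum (fun k => intervalFaces (f k)) fun _ a => if Odd a then x else 1).symm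
    _ = (x + 2) ^ cdim f := by simp_rw [sum_intervalFaces, pow_cdim]

lemma card_faces_filter_cdim (f : Fin n → ℤ) (i : ℕ) :
    {e ∈ faces f | cdim e = i}.card = 2 ^ (cdim f - i) * (cdim f).choose i := by
  have hcoeff := congrArg (Polynomial.coeff · i)
    (sum_faces_pow_cdim (Polynomial.X : Polynomial ℕ) f)
  have htwo : (2 : Polynomial ℕ) = Polynomial.C 2 := rfl
  simpa only [Polynomial.finsetSum_coeff, Polynomial.coeff_X_pow, Finset.sum_boole, eq_comm,
    htwo, Polynomial.coeff_X_add_C_pow, Nat.cast_id] using hcoeff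

lemma ncard_setOf_cdim_and_bounds {f : Fin n → ℤ} {i : ℕ} (hi : i < cdim f) :
    {e | cdim e = i ∧ Bounds e f}.ncard = 2 ^ (cdim f - i) * (cdim f).choose i := by
  rw [← card_faces_filter_cdim, ← Set.ncard_coe_finset]
  congr 1
  ext e
  simp only [Set.mem_ofPred_eq, Finset.coe_filter, bounds_iff]
  exact ⟨fun ⟨he, _, hef⟩ => ⟨hef, he⟩, fun ⟨hef, he⟩ => ⟨he, he ▸ hi, hef⟩⟩

end Faces

section FreeCells

variable {n : ℕ} {D : Set (Fin n → ℤ)} {i j : ℕ}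

lemma cells_finite (hD : D.Finite) (i : ℕ) : (Cells D i).Finite := by
  refine (hD.biUnion fun v _ => (faces v).finite_toSet).subset ?_
  rintro e ⟨-, he | ⟨v, hv, hev⟩⟩
  · exact Set.mem_biUnion he (self_mem_faces e)
  · exact Set.mem_biUnion hv (bounds_iff.1 hev).2

lemma freeCells_finite (hD : D.Finite) (i : ℕ) : (FreeCells D i).Finite :=
  (cells_finite hD i).subset fun _ he => he.1

lemma Bounds.block_subset {e f : Fin n → ℤ} (hef : Bounds e f) : Block f ⊆ Block e :=
  fun _ hv => ⟨hv.1, hef.trans hv.2⟩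

lemma Bounds.mem_cells {e f : Fin n → ℤ} (hef : Bounds e f) (hf : f ∈ Cells D j) :
    e ∈ Cells D (cdim e) := by
  obtain ⟨-, hfD | ⟨v, hv, hfv⟩⟩ := hf
  · exact ⟨rfl, Or.inr ⟨f, hfD, hef⟩⟩
  · exact ⟨rfl, Or.inr ⟨v, hv, hef.trans hfv⟩⟩

lemma Bounds.mem_freeCells {e f : Fin n → ℤ} (hef : Bounds e f) (hf : f ∈ FreeCells D j) :
    e ∈ FreeCells D (cdim e) :=
  ⟨hef.mem_cells hf.1, fun he => hf.2 (hef.block_subset.trans he)⟩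

lemma ncard_setOf_mem_freeCells_and_bounds {f : Fin n → ℤ} (hij : i < j) (hf : f ∈ FreeCells D j) :
    {e | e ∈ FreeCells D i ∧ Bounds e f}.ncard = 2 ^ (j - i) * j.choose i := by
  have hfaces : {e | e ∈ FreeCells D i ∧ Bounds e f} = {e | cdim e = i ∧ Bounds e f} :=
    Set.ext fun e => and_congr_left fun hef =>
      ⟨fun he => he.1.1, fun he => he ▸ hef.mem_freeCells hf⟩
  obtain rfl : cdim f = j := hf.1.1
  rw [hfaces, ncard_setOf_cdim_and_bounds hij]

theorem sum_bcount_general (hij : i < j) (hfree : (FreeCells D j).Finite) :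
    ∑ᶠ e ∈ FreeCells D i, bcount e D j = 2 ^ (j - i) * j.choose i * cStar D j :=
  calc ∑ᶠ e ∈ FreeCells D i, bcount e D j
      = ∑ᶠ f ∈ FreeCells D j, {e | e ∈ FreeCells D i ∧ Bounds e f}.ncard :=
        finsum_mem_ncard_comm Bounds hfree fun f _ =>
          (finite_setOf_bounds f).subset fun _ he => he.2
    _ = ∑ᶠ f ∈ FreeCells D j, 2 ^ (j - i) * j.choose i :=
        finsum_mem_congr rfl fun _ hf => ncard_setOf_mem_freeCells_and_bounds hij hf
    _ = 2 ^ (j - i) * j.choose i * cStar D j := by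
        rw [finsum_mem_eq_finite_toFinset_sum _ hfree, Finset.sum_const, smul_eq_mul, mul_comm,
          cStar, Set.ncard_eq_toFinset_card _ hfree]

end FreeCells

/-- For `i < j ≤ n-1`, `∑_{e ∈ bd_i(D)} b_j(e, D) = c_{i→j}·c*_j(D)`, where
`c_{i→j} = 2^(j-i)·C(j,i)` and the sum ranges over free `i`-cells of `D`. -/
theorem sum_bcount (n : ℕ) (hn : 2 ≤ n) (D : Set (Fin n → ℤ))
    (hfin : D.Finite) (hvox : ∀ v ∈ D, IsVoxel v)
    (i j : ℕ) (hij : i < j) (hj : j ≤ n - 1) :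
    ∑ᶠ e ∈ FreeCells D i, bcount e D j =
      2 ^ (j - i) * Nat.choose j i * cStar D j :=
  sum_bcount_general hij (freeCells_finite hfin j)

end DigitalGeometry
end
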